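/- Let A and B be disjoint subsets of V with A nonempty, and let p be a strictly positive joint probability mass function of the discrete random vector (X_v)_{v∈V}. Then for every cell i*_A of the A-table with all coordinates ≥ 2 and every cell i_B of the B-table, the conditional multivariate logistic contrast of p_{A|B} satisfies η^{(A)}(i*_A | i_B) = Σ_{b ⊆ B} λ^{A∪B}_{A∪b}(i*_A, i_b), where λ^{A∪B}_s are the baseline-coded log-linear parameters of the marginal distribution p_{A∪B}. -/

import Mathlib

open scoped Classical BigOperators

/-- A mixed graph on a node set `V`: a set of directed edges and a symmetric
irreflexive set of undirected edges, the two edge sets being disjoint. -/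
structure MixedGraph (V : Type*) where
  dir : V → V → Prop
  undir : V → V → Prop
  undir_symm : ∀ {a b}, undir a b → undir b a
  undir_irrefl : ∀ a, ¬ undir a a
  edge_disjoint : ∀ a b, dir a b → ¬ undir a b

namespace MixedGraph

variable {V : Type*} [Fintype V] [DecidableEq V] (G : MixedGraph V)

/-- One step of a semi-directed path: an undirected edge or a directed edge
followed in the direction of traversal. -/
def step (a b : V) : Prop := G.dir a b ∨ G.undir a b

/-- No semi-directed cycle: there is no directed edge `a → b` together with a
semi-directed path from `b` back to `a`. -/
def NoSemiDirectedCycle : Prop :=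
  ∀ a b : V, G.dir a b → ¬ Relation.ReflTransGen G.step b a

/-- Two nodes are in the same chain component iff they are joined by a path of
undirected edges (the equivalence relation generated by the undirected part). -/
def sameComp (a b : V) : Prop := Relation.ReflTransGen G.undir a b

/-- The chain component of a node. -/
noncomputable def component (v : V) : Finset V :=
  Finset.univ.filter fun w => G.sameComp v w

/-- `T` is a chain component of `G`. -/
def IsComponent (T : Finset V) : Prop := ∃ v, T = G.component v

/-- The collection of chain components of `G`. -/
noncomputable def componentsF : Finset (Finset V) :=
  Finset.univ.image fun v => G.component v

/-- The parents `pa_G(A)`: nodes outside `A` with a directed edge into `A`. -/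
noncomputable def paG (A : Finset V) : Finset V :=
  Finset.univ.filter fun w => w ∉ A ∧ ∃ v ∈ A, G.dir w v

/-- The (inclusive) neighbours `Nb_G(A)`: `A` together with all nodes joined to
`A` by an undirected edge. -/
noncomputable def nbG (A : Finset V) : Finset V :=
  A ∪ Finset.univ.filter fun w => ∃ v ∈ A, G.undir v w

/-- The edge relation of the directed graph `D` of chain components:
`T₁ → T₂` iff they are distinct chain components and `G` has a directed edge
from a node of `T₁` to a node of `T₂`. -/
def dirD (T₁ T₂ : Finset V) : Prop :=
  G.IsComponent T₁ ∧ G.IsComponent T₂ ∧ T₁ ≠ T₂ ∧ ∃ v ∈ T₁, ∃ w ∈ T₂, G.dir v w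

/-- `pa_D(T)`: the union of the parent components of `T` in `D`. -/
noncomputable def paD (T : Finset V) : Finset V :=
  Finset.univ.filter fun w => G.dirD (G.component w) T

/-- `nd_D(T)`: the union of the components `T'` such that there is no directed
path from `T` to `T'` in `D`. -/
noncomputable def ndD (T : Finset V) : Finset V :=
  Finset.univ.filter fun w => ¬ Relation.ReflTransGen G.dirD T (G.component w)

/-- A set of nodes `A` is connected if the subgraph of the undirected part of
`G` induced by `A` is connected (in particular nonempty). -/
def ConnectedIn (A : Finset V) : Prop :=
  A.Nonempty ∧ ∀ a ∈ A, ∀ b ∈ A,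
    Relation.ReflTransGen (fun x y => x ∈ A ∧ y ∈ A ∧ G.undir x y) a b

/-- The connected component of `v` inside the induced subgraph on `A`. -/
noncomputable def compIn (A : Finset V) (v : V) : Finset V :=
  A.filter fun w =>
    Relation.ReflTransGen (fun x y => x ∈ A ∧ y ∈ A ∧ G.undir x y) v w

/-- The set of connected components of the induced subgraph on `A`. -/
noncomputable def connComps (A : Finset V) : Finset (Finset V) :=
  A.image fun v => G.compIn A v

/-- `ord` is a strict total order of the chain components consistent with `G`:
`ord T T'` implies that `T` is not a parent component of `T'`. -/
def ConsistentOrder (ord : Finset V → Finset V → Prop) : Prop :=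
  (∀ T₁ T₂, G.IsComponent T₁ → G.IsComponent T₂ → T₁ ≠ T₂ →
      ord T₁ T₂ ∨ ord T₂ T₁) ∧
  (∀ T, G.IsComponent T → ¬ ord T T) ∧
  (∀ T₁ T₂ T₃, G.IsComponent T₁ → G.IsComponent T₂ → G.IsComponent T₃ →
      ord T₁ T₂ → ord T₂ T₃ → ord T₁ T₃) ∧
  (∀ T₁ T₂, G.IsComponent T₁ → G.IsComponent T₂ → ord T₁ T₂ → ¬ G.dirD T₁ T₂)

/-- `pre(T)`: the union of all the chain components `T'` with `T ≺ T'`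
(the predecessors, i.e. the past, of `T`). -/
noncomputable def pre (ord : Finset V → Finset V → Prop) (T : Finset V) :
    Finset V :=
  Finset.univ.filter fun w => ord T (G.component w)

end MixedGraph

/-- A cell of the joint contingency table: variable `v` takes one of the
levels `0, …, r v - 1` (level `0` playing the role of the first level `1`). -/
abbrev Cell {V : Type*} (r : V → ℕ) := ∀ v : V, Fin (r v)

variable {V : Type*} [Fintype V] [DecidableEq V] {r : V → ℕ}

/-- The marginal probability `p_S(i_S)` (as a function of a full cell `i`,
depending on it only through the coordinates in `S`). -/
noncomputable def marginal (p : Cell r → ℝ) (S : Finset V) (i : Cell r) : ℝ :=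
  ∑ j : Cell r, if ∀ v ∈ S, j v = i v then p j else 0

/-- The conditional probability `p_{A|B}(i_A | i_B)`. -/
noncomputable def condProb (p : Cell r → ℝ) (A B : Finset V) (i : Cell r) : ℝ :=
  marginal p (A ∪ B) i / marginal p B i

/-- `p` is a strictly positive joint probability mass function. -/
def IsPosPMF (p : Cell r → ℝ) : Prop :=
  (∀ i, 0 < p i) ∧ ∑ i : Cell r, p i = 1

/-- Conditional independence `A ⊥ B | C`. -/
def CondIndep (p : Cell r → ℝ) (A B C : Finset V) : Prop :=
  ∀ i : Cell r,
    marginal p (A ∪ B ∪ C) i * marginal p C i =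
      marginal p (A ∪ C) i * marginal p (B ∪ C) i

/-- The cell agreeing with `i` on `S` and equal to the first (reference)
level outside `S`. -/
def splice (hr : ∀ v, 2 ≤ r v) (S : Finset V) (i : Cell r) : Cell r :=
  fun v => if v ∈ S then i v else ⟨0, by have := hr v; omega⟩

/-- The conditional multivariate logistic contrast
`η^{(A)}(i_A | i_B) = Σ_{s ⊆ A} (−1)^{|A∖s|} log p_{A|B}((i_s, 1_{A∖s}) | i_B)`. -/
noncomputable def mlContrast (hr : ∀ v, 2 ≤ r v) (p : Cell r → ℝ)
    (A B : Finset V) (i : Cell r) : ℝ :=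
  ∑ s ∈ A.powerset,
    (-1 : ℝ) ^ (A \ s).card * Real.log (condProb p A B (splice hr (s ∪ B) i))

/-- The multivariate regression (MR) Markov property for the chain graph `G`
with respect to the consistent ordering `ord`: for every chain component `T`
and every nonempty `A ⊆ T`, (MR1) if `A` is connected then
`A ⊥ (pre(T)∖pa_G(A)) | pa_G(A)`, and (MR2) if `A` is disconnected then its
connected components are mutually independent given `pre(T)`. -/
def MRMarkov (G : MixedGraph V) (ord : Finset V → Finset V → Prop)
    (p : Cell r → ℝ) : Prop :=
  ∀ T : Finset V, G.IsComponent T → ∀ A ⊆ T, A.Nonempty →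
    (G.ConnectedIn A →
      CondIndep p A (G.pre ord T \ G.paG A) (G.paG A)) ∧
    (¬ G.ConnectedIn A →
      ∀ i : Cell r,
        condProb p A (G.pre ord T) i =
          ∏ Aj ∈ G.connComps A, condProb p Aj (G.pre ord T) i)

/-- The block-recursive Markov property of type IV for the chain graph `G`:
(IV0) `T ⊥ (nd_D(T)∖pa_D(T)) | pa_D(T)`;
(IV1) `A ⊥ (pa_D(T)∖pa_G(A)) | pa_G(A)` for all `A ⊆ T`;
(IV2) `A ⊥ (T∖Nb_G(A)) | pa_D(T)` for all connected `A ⊆ T`. -/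
def TypeIVMarkov (G : MixedGraph V) (p : Cell r → ℝ) : Prop :=
  (∀ T : Finset V, G.IsComponent T →
      CondIndep p T (G.ndD T \ G.paD T) (G.paD T)) ∧
  (∀ T : Finset V, G.IsComponent T → ∀ A ⊆ T,
      CondIndep p A (G.paD T \ G.paG A) (G.paG A)) ∧
  (∀ T : Finset V, G.IsComponent T → ∀ A ⊆ T, G.ConnectedIn A →
      CondIndep p A (T \ G.nbG A) (G.paD T))

/-- The alternating sum over `s ⊆ A` with `t ⊆ s ∪ B`. -/
theorem aux_alt_sum {V : Type*} [DecidableEq V] (A B t : Finset V)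
    (hAB : Disjoint A B) (ht : t ⊆ A ∪ B) :
    ∑ s ∈ A.powerset, (if t ⊆ s ∪ B then (-1 : ℝ) ^ (A \ s).card else 0)
      = if A ⊆ t then 1 else 0 := by
  rw [← Finset.sum_filter]
  have h1 : ∑ s ∈ A.powerset with t ⊆ s ∪ B, (-1 : ℝ) ^ (A \ s).card
      = ∑ u ∈ (A \ t).powerset, (-1 : ℝ) ^ u.card := by
    refine Finset.sum_bij' (fun s _ => A \ s) (fun u _ => A \ u) ?_ ?_ ?_ ?_ ?_
    · intro s hs
      simp only [Finset.mem_filter, Finset.mem_powerset] at hs ⊢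
      intro x hx
      have h0 : x ∈ A → x ∉ B := fun h => Finset.disjoint_left.mp hAB h
      have h2 : x ∈ t → x ∈ s ∪ B := fun h => hs.2 h
      simp only [Finset.mem_sdiff, Finset.mem_union] at *
      tauto
    · intro u hu
      simp only [Finset.mem_filter, Finset.mem_powerset] at hu ⊢
      refine ⟨Finset.sdiff_subset, ?_⟩
      intro x hx
      have h2 := ht hx
      have h3 := @hu x
      simp only [Finset.mem_sdiff, Finset.mem_union] at *
      tauto
    · intro s hs
      simp only [Finset.mem_filter, Finset.mem_powerset] at hs
      exact Finset.sdiff_sdiff_eq_self hs.1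
    · intro u hu
      simp only [Finset.mem_powerset] at hu
      exact Finset.sdiff_sdiff_eq_self (hu.trans Finset.sdiff_subset)
    · intro s hs
      rfl
  rw [h1]
  have h2 := Finset.sum_powerset_neg_one_pow_card (x := A \ t)
  have h3 : ((∑ u ∈ (A \ t).powerset, (-1 : ℤ) ^ u.card : ℤ) : ℝ)
      = ((if A \ t = ∅ then 1 else 0 : ℤ) : ℝ) := by rw [h2]
  push_cast at h3
  rw [h3]
  simp only [Finset.sdiff_eq_empty_iff_subset]

theorem aux_marginal_pos {V : Type*} [Fintype V] [DecidableEq V] {r : V → ℕ}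
    (p : Cell r → ℝ) (hp : IsPosPMF p) (S : Finset V) (i : Cell r) :
    0 < marginal p S i := by
  unfold marginal
  refine Finset.sum_pos' ?_ ⟨i, Finset.mem_univ _, ?_⟩
  · intro j _
    split_ifs
    · exact (hp.1 j).le
    · exact le_rfl
  · simpa using hp.1 i

theorem aux_marginal_congr {V : Type*} [Fintype V] [DecidableEq V] {r : V → ℕ}
    (p : Cell r → ℝ) (S : Finset V) (i j : Cell r) (h : ∀ v ∈ S, i v = j v) :
    marginal p S i = marginal p S j := by
  unfold marginal
  refine Finset.sum_congr rfl fun k _ => ?_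
  have : (∀ v ∈ S, k v = i v) ↔ (∀ v ∈ S, k v = j v) :=
    forall₂_congr fun v hv => by rw [h v hv]
  simp only [this]

/-- Lemma 2: the conditional multivariate logistic contrast
`η^{(A)}(i*_A | i_B)` equals `Σ_{b ⊆ B} λ^{A∪B}_{A∪b}(i*_A, i_b)`, where the
`λ^{A∪B}_s` are the baseline-coded log-linear parameters of the marginal
distribution `p_{A∪B}`. -/
theorem mlContrast_eq_sum_loglin
    {V : Type*} [Fintype V] [DecidableEq V] {r : V → ℕ} (hr : ∀ v, 2 ≤ r v)
    (p : Cell r → ℝ) (hp : IsPosPMF p)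
    (A B : Finset V) (hA : A.Nonempty) (hAB : Disjoint A B)
    (lam : Finset V → Cell r → ℝ)
    (hloc : ∀ s, ∀ i j : Cell r, (∀ v ∈ s, i v = j v) → lam s i = lam s j)
    (hbase : ∀ s, ∀ i : Cell r, (∃ v ∈ s, (i v : ℕ) = 0) → lam s i = 0)
    (hsum : ∀ i : Cell r,
      Real.log (marginal p (A ∪ B) i) = ∑ s ∈ (A ∪ B).powerset, lam s i) :
    ∀ i : Cell r, (∀ v ∈ A, (i v : ℕ) ≠ 0) →
      mlContrast hr p A B i = ∑ b ∈ B.powerset, lam (A ∪ b) i := by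
  intro i _
  have hlam : ∀ s t : Finset V, lam t (splice hr (s ∪ B) i)
      = if t ⊆ s ∪ B then lam t i else 0 := by
    intro s t
    split_ifs with h
    · refine hloc t _ _ fun v hv => ?_
      simp only [splice, if_pos (h hv)]
    · obtain ⟨v, hv, hv'⟩ := Finset.not_subset.mp h
      exact hbase t _ ⟨v, hv, by simp only [splice, if_neg hv']⟩
  have hlog : ∀ s : Finset V, Real.log (condProb p A B (splice hr (s ∪ B) i))
      = (∑ t ∈ (A ∪ B).powerset, if t ⊆ s ∪ B then lam t i else 0)
        - Real.log (marginal p B i) := by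
    intro s
    unfold condProb
    rw [Real.log_div (aux_marginal_pos p hp _ _).ne' (aux_marginal_pos p hp _ _).ne', hsum]
    congr 1
    · exact Finset.sum_congr rfl fun t _ => hlam s t
    · congr 1
      refine aux_marginal_congr p B _ _ fun v hv => ?_
      simp only [splice, if_pos (Finset.mem_union_right s hv)]
  have hzero : ∑ s ∈ A.powerset, (-1 : ℝ) ^ (A \ s).card = 0 := by
    have h := aux_alt_sum A B ∅ hAB (Finset.empty_subset _)
    simpa [hA.ne_empty] using h
  unfold mlContrast
  simp only [hlog, mul_sub, Finset.sum_sub_distrib]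
  rw [← Finset.sum_mul, hzero, zero_mul, sub_zero]
  simp only [Finset.mul_sum]
  rw [Finset.sum_comm]
  have hin : ∀ t ∈ (A ∪ B).powerset,
      ∑ s ∈ A.powerset, (-1 : ℝ) ^ (A \ s).card * (if t ⊆ s ∪ B then lam t i else 0)
        = if A ⊆ t then lam t i else 0 := by
    intro t ht
    have h := aux_alt_sum A B t hAB (Finset.mem_powerset.mp ht)
    have h' : ∑ s ∈ A.powerset, (-1 : ℝ) ^ (A \ s).card * (if t ⊆ s ∪ B then lam t i else 0)
        = (∑ s ∈ A.powerset, (if t ⊆ s ∪ B then (-1 : ℝ) ^ (A \ s).card else 0)) * lam t i := by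
      rw [Finset.sum_mul]
      refine Finset.sum_congr rfl fun s _ => ?_
      split_ifs <;> simp
    rw [h', h]
    split_ifs <;> simp
  rw [Finset.sum_congr rfl hin, ← Finset.sum_filter]
  refine Finset.sum_bij' (fun t _ => t \ A) (fun b _ => A ∪ b) ?_ ?_ ?_ ?_ ?_
  · intro t ht
    simp only [Finset.mem_filter, Finset.mem_powerset] at ht ⊢
    intro x hx
    have h2 : x ∈ t → x ∈ A ∪ B := fun h => ht.1 h
    simp only [Finset.mem_sdiff, Finset.mem_union] at *
    tauto
  · intro b hb
    simp only [Finset.mem_filter, Finset.mem_powerset] at hb ⊢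
    exact ⟨Finset.union_subset_union_right hb, Finset.subset_union_left⟩
  · intro t ht
    simp only [Finset.mem_filter] at ht
    exact Finset.union_sdiff_of_subset ht.2
  · intro b hb
    simp only [Finset.mem_powerset] at hb
    exact Finset.union_sdiff_cancel_left (hAB.mono_right hb)
  · intro t ht
    simp only [Finset.mem_filter] at ht
    rw [Finset.union_sdiff_of_subset ht.2]
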